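/- Let G = (V,E) be a connected multigraph and W ⊆ E such that the subgraph G[W] induced by W is a forest. Let W_1, ..., W_r be the components of G[W], and let G⋆W be the graph obtained from G by adding, for each i = 1,...,r, a new vertex w_i together with new edges joining w_i to every vertex of W_i. Let W' = E(G⋆W) − E(G). Then for any W_0 ⊆ W, τ_G(W) = τ_{G⋆W}(W') = τ_{(G⋆W) − W_0}(W'). -/

import Mathlib

/-!
Spanning trees of multigraphs: common definitions.

A multigraph on a vertex type `V` with edge type `E` is given by an incidence
map `inc : E → Sym2 V` sending each edge to its (unordered) pair of endpoints.
-/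

namespace PaperST

universe u v

/-- A multigraph on vertex type `V` with edge type `E`. -/
structure Multigraph (V : Type u) (E : Type v) where
  /-- the two (possibly equal) endpoints of each edge -/
  inc : E → Sym2 V

namespace Multigraph

variable {V : Type u} {E : Type v}

/-- One step along an edge of `T`. -/
def Step (G : Multigraph V E) (T : Set E) (u v : V) : Prop :=
  ∃ e ∈ T, G.inc e = s(u, v)

theorem step_symm (G : Multigraph V E) (T : Set E) : Symmetric (G.Step T) := by
  rintro u v ⟨e, he, hinc⟩
  exact ⟨e, he, by rw [hinc]; exact Sym2.eq_swap⟩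

/-- Reachability using only edges in `T`. -/
def Reach (G : Multigraph V E) (T : Set E) : V → V → Prop :=
  Relation.ReflTransGen (G.Step T)

/-- The spanning subgraph `G⟨T⟩` is connected. -/
def ConnectedOn (G : Multigraph V E) (T : Set E) : Prop :=
  ∀ u v : V, G.Reach T u v

/-- `G` is connected. -/
def Connected (G : Multigraph V E) : Prop :=
  G.ConnectedOn Set.univ

/-- `G` has no loops. -/
def Loopless (G : Multigraph V E) : Prop :=
  ∀ e : E, ¬ (G.inc e).IsDiag

/-- A spanning tree of a (finite) multigraph: a connected spanning subgraph
with `|V| - 1` edges. -/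
def IsSpanningTree (G : Multigraph V E) (T : Set E) : Prop :=
  G.ConnectedOn T ∧ T.ncard + 1 = Nat.card V

/-- The set `ST_G(M)` of spanning trees of `G` containing all edges of `M`. -/
def ST (G : Multigraph V E) (M : Set E) : Set (Set E) :=
  {T | G.IsSpanningTree T ∧ M ⊆ T}

/-- `τ_G(M)`: the number of spanning trees of `G` containing all edges of `M`. -/
noncomputable def tau (G : Multigraph V E) (M : Set E) : ℕ :=
  (G.ST M).ncard

/-- The spanning subgraph `G⟨W⟩` is a forest (no cycles): there are no loops in
`W` and every edge of `W` is a bridge of `G⟨W⟩`. -/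
def IsForest (G : Multigraph V E) (W : Set E) : Prop :=
  ∀ e ∈ W, ¬ (G.inc e).IsDiag ∧
    ∀ u v : V, G.inc e = s(u, v) → ¬ G.Reach (W \ {e}) u v

/-- Edges with all endpoints in `U`: the edge set of the induced subgraph `G[U]`. -/
def edgesWithin (G : Multigraph V E) (U : Set V) : Set E :=
  {e | ∀ v ∈ G.inc e, v ∈ U}

/-- `E_G(U₁, U₂)`: edges with one end in `U₁` and the other end in `U₂`. -/
def edgesBetween (G : Multigraph V E) (U₁ U₂ : Set V) : Set E :=
  {e | ∃ u v, G.inc e = s(u, v) ∧ u ∈ U₁ ∧ v ∈ U₂}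

/-- `E_G(U) = E_G(U, V − U)`: edges with one end in `U` and the other outside. -/
def edgeBoundary (G : Multigraph V E) (U : Set V) : Set E :=
  G.edgesBetween U Uᶜ

/-- `U` is a clique of `G`: the induced subgraph `G[U]` is a complete graph,
i.e. exactly one edge joins each pair of distinct vertices of `U`, and there
are neither loops nor parallel edges inside `U`. -/
def IsClique (G : Multigraph V E) (U : Set V) : Prop :=
  (∀ u ∈ U, ∀ v ∈ U, u ≠ v → ∃! e : E, G.inc e = s(u, v)) ∧
    ∀ e ∈ G.edgesWithin U, ¬ (G.inc e).IsDiag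

/-- The degree of a vertex: the number of edges incident with it. -/
noncomputable def degree (G : Multigraph V E) (v : V) : ℕ :=
  {e : E | v ∈ G.inc e}.ncard

/-- The vertices incident with some edge of `W`: the vertex set of `G[W]`. -/
def supp (G : Multigraph V E) (W : Set E) : Set V :=
  {v | ∃ e ∈ W, v ∈ G.inc e}

/-- Edges `e` and `f` lie in the same component of `G[W]`. -/
def EdgeConn (G : Multigraph V E) (W : Set E) (e f : E) : Prop :=
  ∃ u v : V, u ∈ G.inc e ∧ v ∈ G.inc f ∧ G.Reach W u v

/-- Every component of `G[W]` is a star whose center lies in `C`. -/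
def StarComponents (G : Multigraph V E) (W : Set E) (C : Set V) : Prop :=
  ∀ e ∈ W, ∃ w ∈ C, ∀ f ∈ W, G.EdgeConn W e f →
    (w ∈ G.inc f ∧ ¬ (G.inc f).IsDiag ∧
      ∀ g ∈ W, G.EdgeConn W e g → G.inc g = G.inc f → g = f)

/-- The setoid on `V` identifying the vertices connected by edges of `W`. -/
def contractSetoid (G : Multigraph V E) (W : Set E) : Setoid V where
  r := G.Reach W
  iseqv := ⟨fun _ => Relation.ReflTransGen.refl,
    fun h => (@Relation.ReflTransGen.symmetric _ _ ⟨fun _ _ h => G.step_symm W h⟩).symm _ _ h,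
    fun h h' => Relation.ReflTransGen.trans h h'⟩

/-- The contraction `G/W` of the edges in `W`. -/
def contract (G : Multigraph V E) (W : Set E) :
    Multigraph (Quotient (G.contractSetoid W)) {e : E // e ∉ W} :=
  ⟨fun e => (G.inc e.val).map (Quotient.mk (G.contractSetoid W))⟩

/-- Deletion `G − D` of the edges in `D`. -/
def deleteEdges (G : Multigraph V E) (D : Set E) : Multigraph V {e : E // e ∉ D} :=
  ⟨fun e => G.inc e.val⟩

/-- The closed neighbourhood `N_G[S]`. -/
def closedNbhd (G : Multigraph V E) (S : Set V) : Set V :=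
  S ∪ {v | ∃ u ∈ S, ∃ e : E, G.inc e = s(u, v)}

/-- The induced subgraph `G[A]`, described using a choice `ends` of the pair of
endpoints of each edge. -/
def induce (G : Multigraph V E) (A : Set V) (ends : E → V × V)
    (hends : ∀ e, G.inc e = s((ends e).1, (ends e).2)) :
    Multigraph A {e : E // e ∈ G.edgesWithin A} :=
  ⟨fun e => s(⟨(ends e.val).1, e.prop _ (by rw [hends]; exact Sym2.mem_mk_left _ _)⟩,
              ⟨(ends e.val).2, e.prop _ (by rw [hends]; exact Sym2.mem_mk_right _ _)⟩)⟩

end Multigraph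


open Multigraph

/-- The graph `G⋆W`: for each component (indexed by `i : Fin r` via `comp`) of
`G[W]`, add a new vertex `wᵢ` joined to every vertex of that component. -/
def Multigraph.starGraph {V : Type u} {E : Type v} (G : Multigraph V E)
    (W : Set E) {r : ℕ} (comp : V → Fin r) :
    Multigraph (V ⊕ Fin r)
      (E ⊕ {p : Fin r × V // p.2 ∈ G.supp W ∧ comp p.2 = p.1}) :=
  ⟨Sum.elim (fun e => (G.inc e).map Sum.inl)
    (fun p => s(Sum.inr p.val.1, Sum.inl p.val.2))⟩

/-!
Counting components edge by edge shows that a connected edge set has at least `|V| - 1` edges and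
that a forest `W` satisfies `|W| + r = |V(G[W])|`, where `r` is the number of components of `G[W]`.
For `F ⊆ E(G)` the edge set `F ∪ W'` is connected in `G⋆W` iff `F ∪ W` is connected in `G`, because
the star at `wᵢ` joins exactly the vertices that the `i`-th component of `W` joins. Hence a spanning
tree `F ∪ W'` of `G⋆W` remains connected when the edges of `W` are removed from `F`, so by
minimality it contains none of them. Therefore `T ↦ (T \ W) ∪ W'` is a bijection from the spanning
trees of `G` containing `W` to those of `G⋆W` containing `W'`, and deleting `W₀ ⊆ W` from `G⋆W`
destroys none of the latter.
-/

section AdjoinInr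

variable {α β : Type*}

/-- The subset `A ∪ β` of the disjoint union of `α` and `β`. With `α` the edges of `G` and `β` the
new edges of `G⋆W`, these are the edge sets of `G⋆W` that contain `W'`. -/
def adjoinInr (A : Set α) : Set (α ⊕ β) :=
  Sum.inl '' A ∪ Set.range Sum.inr

@[simp]
theorem inl_mem_adjoinInr {A : Set α} {a : α} : (Sum.inl a : α ⊕ β) ∈ adjoinInr A ↔ a ∈ A := by
  simp [adjoinInr]

@[simp]
theorem inr_mem_adjoinInr {A : Set α} {b : β} : (Sum.inr b : α ⊕ β) ∈ adjoinInr A := by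
  simp [adjoinInr]

theorem adjoinInr_subset_adjoinInr {A B : Set α} :
    (adjoinInr A : Set (α ⊕ β)) ⊆ adjoinInr B ↔ A ⊆ B := by
  simp [Set.subset_def]

theorem adjoinInr_injective : Function.Injective (adjoinInr : Set α → Set (α ⊕ β)) :=
  fun _ _ h => (adjoinInr_subset_adjoinInr.1 h.subset).antisymm
    (adjoinInr_subset_adjoinInr.1 h.superset)

theorem range_inr_subset_iff {S : Set (α ⊕ β)} :
    Set.range Sum.inr ⊆ S ↔ ∃ A, adjoinInr A = S := by
  refine ⟨fun hS => ⟨Sum.inl ⁻¹' S, ?_⟩, ?_⟩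
  · ext (a | b)
    · simp
    · simp [hS ⟨b, rfl⟩]
  · rintro ⟨A, rfl⟩
    exact Set.subset_union_right

theorem disjoint_adjoinInr_image_inl {A B : Set α} :
    Disjoint (adjoinInr A : Set (α ⊕ β)) (Sum.inl '' B) ↔ Disjoint A B := by
  simp [Set.disjoint_right]

theorem disjoint_range_inr_image_inl (B : Set α) :
    Disjoint (Set.range Sum.inr : Set (α ⊕ β)) (Sum.inl '' B) := by
  simp [Set.disjoint_right]

theorem map_inl_ne_mk_inr (z : Sym2 α) (b : β) (x : α ⊕ β) : z.map Sum.inl ≠ s(Sum.inr b, x) := by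
  intro h
  have hmem : Sum.inr b ∈ z.map Sum.inl := h ▸ Sym2.mem_mk_left _ _
  simp [Sym2.mem_map] at hmem

theorem finite_adjoinInr [Finite β] {A : Set α} (hA : A.Finite) :
    (adjoinInr A : Set (α ⊕ β)).Finite :=
  (hA.image _).union (Set.finite_range _)

theorem ncard_adjoinInr [Finite β] {A : Set α} (hA : A.Finite) :
    (adjoinInr A : Set (α ⊕ β)).ncard = A.ncard + Nat.card β := by
  rw [adjoinInr, Set.ncard_union_eq (disjoint_range_inr_image_inl A).symm (hA.image _),
    Set.ncard_image_of_injective _ Sum.inl_injective,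
    Set.ncard_range_of_injective Sum.inr_injective]

end AdjoinInr

namespace Multigraph

variable {V : Type u} {E : Type v} {G : Multigraph V E} {S T W : Set E}

section Reach

variable {e : E} {a b u v x y : V}

theorem exists_inc_eq (G : Multigraph V E) (e : E) : ∃ a b, G.inc e = s(a, b) :=
  Sym2.exists.1 ⟨G.inc e, rfl⟩

theorem Step.mono (hST : S ⊆ T) : G.Step S u v → G.Step T u v :=
  fun ⟨e, he, hinc⟩ => ⟨e, hST he, hinc⟩

theorem Step.reach (h : G.Step T u v) : G.Reach T u v :=
  Relation.ReflTransGen.single h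

theorem Reach.refl (G : Multigraph V E) (T : Set E) (v : V) : G.Reach T v v :=
  Relation.ReflTransGen.refl

theorem Reach.symm (h : G.Reach T u v) : G.Reach T v u :=
  (G.contractSetoid T).symm h

theorem Reach.mono (hST : S ⊆ T) (h : G.Reach S u v) : G.Reach T u v :=
  Relation.ReflTransGen.mono (fun _ _ => Step.mono hST) _ _ h

theorem Reach.of_insert (he : G.inc e = s(a, b)) (h : G.Reach (insert e T) x y) :
    G.Reach T x y ∨ (G.Reach T x a ∧ G.Reach T b y) ∨ (G.Reach T x b ∧ G.Reach T a y) := by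
  induction h with
  | refl => exact Or.inl (Reach.refl G T x)
  | @tail y z _ hstep ih =>
    obtain ⟨f, rfl | hf, hinc⟩ := hstep
    · rcases Sym2.eq_iff.1 (he.symm.trans hinc) with ⟨rfl, rfl⟩ | ⟨rfl, rfl⟩
      · have := Reach.refl G T b
        tauto
      · have := Reach.refl G T a
        tauto
    · have hyz : G.Reach T y z := Step.reach ⟨f, hf, hinc⟩
      exact ih.imp (·.trans hyz) (Or.imp (.imp_right (·.trans hyz)) (.imp_right (·.trans hyz)))

theorem Step.mem_supp (h : G.Step W u v) : u ∈ G.supp W ∧ v ∈ G.supp W := by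
  obtain ⟨e, he, hinc⟩ := h
  exact ⟨⟨e, he, hinc ▸ Sym2.mem_mk_left u v⟩, ⟨e, he, hinc ▸ Sym2.mem_mk_right u v⟩⟩

theorem Reach.eq_or_mem_supp (h : G.Reach W u v) : u = v ∨ (u ∈ G.supp W ∧ v ∈ G.supp W) := by
  induction h with
  | refl => exact Or.inl rfl
  | tail _ hstep ih =>
    rcases ih with rfl | ⟨hu, -⟩
    · exact Or.inr hstep.mem_supp
    · exact Or.inr ⟨hu, hstep.mem_supp.2⟩

end Reach

section NumComponents

variable {e : E} {a b : V}

/-- The number of components of the spanning subgraph `G⟨T⟩`, isolated vertices included. -/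
noncomputable def numComponents (G : Multigraph V E) (T : Set E) : ℕ :=
  Nat.card (Quotient (G.contractSetoid T))

theorem numComponents_empty (G : Multigraph V E) : G.numComponents ∅ = Nat.card V := by
  refine (Nat.card_eq_of_bijective (Quotient.mk (G.contractSetoid ∅)) ⟨fun x y h => ?_,
    Quotient.mk_surjective⟩).symm
  have hreach : G.Reach ∅ x y := Quotient.exact h
  exact hreach.eq_or_mem_supp.resolve_right (by simp [supp])

theorem ConnectedOn.numComponents_le_one (h : G.ConnectedOn T) : G.numComponents T ≤ 1 := by
  have : Subsingleton (Quotient (G.contractSetoid T)) :=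
    ⟨Quotient.ind₂ fun u v => Quotient.sound (h u v)⟩
  exact Finite.card_le_one_iff_subsingleton.2 this

theorem numComponents_insert_of_reach (he : G.inc e = s(a, b)) (hab : G.Reach T a b) :
    G.numComponents (insert e T) = G.numComponents T := by
  have hsetoid : G.contractSetoid (insert e T) = G.contractSetoid T := by
    refine Setoid.ext fun x y => ⟨fun h => ?_, Reach.mono (Set.subset_insert e T)⟩
    rcases Reach.of_insert he h with hxy | ⟨hxa, hby⟩ | ⟨hxb, hay⟩
    · exact hxy
    · exact (hxa.trans hab).trans hby
    · exact (hxb.trans hab.symm).trans hay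
  rw [numComponents, numComponents, hsetoid]

theorem bijective_quotientMap_insert (he : G.inc e = s(a, b)) (hab : ¬ G.Reach T a b) :
    Function.Bijective fun c : ({⟦b⟧}ᶜ : Set (Quotient (G.contractSetoid T))) =>
      (Quotient.map id (fun _ _ => Reach.mono (Set.subset_insert e T)) c.1 :
        Quotient (G.contractSetoid (insert e T))) := by
  constructor
  · rintro ⟨⟨x⟩, hx⟩ ⟨⟨y⟩, hy⟩ hxy
    refine Subtype.ext (Quotient.sound ?_)
    rcases Reach.of_insert he (Quotient.exact hxy) with hreach | ⟨-, hby⟩ | ⟨hxb, -⟩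
    · exact hreach
    · exact absurd (Quotient.sound hby.symm) hy
    · exact absurd (Quotient.sound hxb) hx
  · rintro ⟨z⟩
    by_cases hzb : G.Reach T z b
    · have hab' : G.Reach (insert e T) a b := Step.reach ⟨e, Set.mem_insert e T, he⟩
      exact ⟨⟨⟦a⟧, fun h => hab (Quotient.exact h)⟩,
        Quotient.sound (hab'.trans (hzb.symm.mono (Set.subset_insert e T)))⟩
    · exact ⟨⟨⟦z⟧, fun h => hzb (Quotient.exact h)⟩, rfl⟩

theorem numComponents_insert_of_not_reach [Finite V] (he : G.inc e = s(a, b))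
    (hab : ¬ G.Reach T a b) : G.numComponents (insert e T) + 1 = G.numComponents T := by
  have hcard := Nat.card_eq_of_bijective _ (bijective_quotientMap_insert he hab)
  rw [numComponents, ← hcard, Nat.card_coe_set_eq, add_comm,
    ← Set.ncard_singleton (⟦b⟧ : Quotient (G.contractSetoid T)), Set.ncard_add_ncard_compl,
    numComponents]

theorem numComponents_le_numComponents_insert_add_one [Finite V] (G : Multigraph V E) (T : Set E)
    (e : E) : G.numComponents T ≤ G.numComponents (insert e T) + 1 := by
  obtain ⟨a, b, he⟩ := G.exists_inc_eq e
  by_cases hab : G.Reach T a b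
  · exact (numComponents_insert_of_reach he hab).symm.le.trans (Nat.le_succ _)
  · exact (numComponents_insert_of_not_reach he hab).symm.le

theorem card_le_numComponents_add_ncard [Finite V] (G : Multigraph V E) (hT : T.Finite) :
    Nat.card V ≤ G.numComponents T + T.ncard := by
  induction T, hT using Set.Finite.induction_on with
  | empty => simp [numComponents_empty]
  | @insert e T he hT ih =>
    rw [Set.ncard_insert_of_notMem he hT]
    have := G.numComponents_le_numComponents_insert_add_one T e
    omega

theorem ConnectedOn.card_le_ncard_add_one [Finite V] (h : G.ConnectedOn T) (hT : T.Finite) :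
    Nat.card V ≤ T.ncard + 1 := by
  have hle := G.card_le_numComponents_add_ncard hT
  have hone := h.numComponents_le_one
  omega

theorem IsSpanningTree.eq_of_subset [Finite V] (hT : G.IsSpanningTree T) (hTfin : T.Finite)
    (hST : S ⊆ T) (hS : G.ConnectedOn S) : S = T := by
  refine Set.eq_of_subset_of_ncard_le hST ?_ hTfin
  have hle := hS.card_le_ncard_add_one (hTfin.subset hST)
  have hcard := hT.2
  omega

theorem IsForest.subset (hT : G.IsForest T) (hST : S ⊆ T) : G.IsForest S :=
  fun e he => ⟨(hT e (hST he)).1, fun u v hinc h =>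
    (hT e (hST he)).2 u v hinc (h.mono (Set.sdiff_subset_sdiff_left hST))⟩

theorem IsForest.numComponents_add_ncard [Finite V] (hT : G.IsForest T) (hTfin : T.Finite) :
    G.numComponents T + T.ncard = Nat.card V := by
  induction T, hTfin using Set.Finite.induction_on with
  | empty => simp [numComponents_empty]
  | @insert e T he hTfin ih =>
    obtain ⟨a, b, hinc⟩ := G.exists_inc_eq e
    have hbridge : ¬ G.Reach T a b := by
      simpa [he] using (hT e (Set.mem_insert e T)).2 a b hinc
    rw [← ih (hT.subset (Set.subset_insert e T)), Set.ncard_insert_of_notMem he hTfin,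
      ← numComponents_insert_of_not_reach hinc hbridge]
    omega

end NumComponents

section ComponentIndexing

variable {ι : Type*} {comp : V → ι}

/-- `comp` restricts to an indexing by `ι` of the components of `G[W]`. The values of `comp` at
vertices outside `G[W]` are irrelevant. -/
structure IsComponentIndexing (G : Multigraph V E) (W : Set E) (comp : V → ι) : Prop where
  eq_iff_reach : ∀ u v, u ∈ G.supp W → v ∈ G.supp W → (comp u = comp v ↔ G.Reach W u v)
  exists_mem_supp : ∀ i, ∃ v ∈ G.supp W, comp v = i

open Classical in
/-- A label of the component of `v` in the spanning subgraph `G⟨W⟩`: its index if it is a component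
of `G[W]`, and the vertex `v` itself if `v` is isolated. -/
noncomputable def componentLabel (G : Multigraph V E) (W : Set E) (comp : V → ι) (v : V) : V ⊕ ι :=
  if v ∈ G.supp W then Sum.inr (comp v) else Sum.inl v

theorem IsComponentIndexing.componentLabel_eq_iff (h : G.IsComponentIndexing W comp) {u v : V} :
    G.componentLabel W comp u = G.componentLabel W comp v ↔ G.Reach W u v := by
  by_cases huv : u = v
  · simp [huv, Reach.refl]
  have hsupp : G.Reach W u v → u ∈ G.supp W ∧ v ∈ G.supp W :=
    fun hreach => hreach.eq_or_mem_supp.resolve_left huv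
  by_cases hu : u ∈ G.supp W <;> by_cases hv : v ∈ G.supp W
  · simp [componentLabel, hu, hv, h.eq_iff_reach u v hu hv]
  all_goals simpa [componentLabel, hu, hv, huv] using hsupp

theorem IsComponentIndexing.range_componentLabel (h : G.IsComponentIndexing W comp) :
    Set.range (G.componentLabel W comp) = adjoinInr (G.supp W)ᶜ := by
  refine Set.Subset.antisymm ?_ ?_
  · rintro _ ⟨v, rfl⟩
    by_cases hv : v ∈ G.supp W <;> simp [componentLabel, hv]
  · rintro (v | i) hmem
    · exact ⟨v, if_neg (inl_mem_adjoinInr.1 hmem)⟩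
    · obtain ⟨v, hv, rfl⟩ := h.exists_mem_supp i
      exact ⟨v, if_pos hv⟩

theorem IsComponentIndexing.finite_index [Finite V] (h : G.IsComponentIndexing W comp) :
    Finite ι :=
  Finite.of_surjective comp fun i => (h.exists_mem_supp i).imp fun _ => And.right

theorem IsComponentIndexing.numComponents_eq [Finite V] (h : G.IsComponentIndexing W comp) :
    G.numComponents W = (G.supp W)ᶜ.ncard + Nat.card ι := by
  have := h.finite_index
  have hker : G.contractSetoid W = Setoid.ker (G.componentLabel W comp) :=
    Setoid.ext fun _ _ => h.componentLabel_eq_iff.symm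
  rw [numComponents, hker, Nat.card_congr (Setoid.quotientKerEquivRange _), Nat.card_coe_set_eq,
    h.range_componentLabel, ncard_adjoinInr (Set.toFinite _)]

theorem IsForest.ncard_add_card_eq_ncard_supp [Finite V] (hW : G.IsForest W) (hWfin : W.Finite)
    (h : G.IsComponentIndexing W comp) : W.ncard + Nat.card ι = (G.supp W).ncard := by
  have hforest := hW.numComponents_add_ncard hWfin
  have hcomponents := h.numComponents_eq
  have hcompl := Set.ncard_add_ncard_compl (G.supp W)
  omega

end ComponentIndexing

section DeleteEdges

variable {D M : Set E}

theorem step_deleteEdges (G : Multigraph V E) (D : Set E) (S : Set {e // e ∉ D}) :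
    (G.deleteEdges D).Step S = G.Step (Subtype.val '' S) := by
  ext u v
  simp [Step, deleteEdges]

theorem isSpanningTree_deleteEdges_iff {S : Set {e // e ∉ D}} :
    (G.deleteEdges D).IsSpanningTree S ↔ G.IsSpanningTree (Subtype.val '' S) := by
  simp only [IsSpanningTree, ConnectedOn, Reach, step_deleteEdges,
    Set.ncard_image_of_injective _ Subtype.val_injective]

theorem image_val_ST_deleteEdges (G : Multigraph V E) (hMD : Disjoint M D) :
    Set.image Subtype.val '' (G.deleteEdges D).ST (Subtype.val ⁻¹' M) =
      {T ∈ G.ST M | Disjoint T D} := by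
  ext T
  constructor
  · rintro ⟨S, ⟨htree, hMS⟩, rfl⟩
    refine ⟨⟨isSpanningTree_deleteEdges_iff.1 htree, fun e he => ?_⟩, ?_⟩
    · exact ⟨⟨e, Set.disjoint_left.1 hMD he⟩, hMS he, rfl⟩
    · simp +contextual [Set.disjoint_left]
  · rintro ⟨⟨htree, hMT⟩, hTD⟩
    have himage : Subtype.val '' (Subtype.val ⁻¹' T : Set {e // e ∉ D}) = T :=
      Set.image_preimage_eq_of_subset fun e he =>
      ⟨⟨e, Set.disjoint_left.1 hTD he⟩, rfl⟩
    refine ⟨Subtype.val ⁻¹' T, ⟨?_, Set.preimage_mono hMT⟩, himage⟩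
    rwa [isSpanningTree_deleteEdges_iff, himage]

theorem tau_deleteEdges (hMD : Disjoint M D) (hST : ∀ T ∈ G.ST M, Disjoint T D) :
    (G.deleteEdges D).tau (Subtype.val ⁻¹' M) = G.tau M := by
  rw [tau, tau, ← Set.ncard_image_of_injective _ Subtype.val_injective.image_injective,
    image_val_ST_deleteEdges G hMD, Set.sep_eq_self_iff_mem_true.2 hST]

end DeleteEdges

section StarGraph

variable {r : ℕ} {comp : V → Fin r} {F : Set E} {u v : V} {i j : Fin r}

theorem step_starGraph_inl_inl :
    (G.starGraph W comp).Step (adjoinInr F) (Sum.inl u) (Sum.inl v) ↔ G.Step F u v := by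
  have hinc (e : E) : (G.inc e).map (Sum.inl : V → V ⊕ Fin r) = s(Sum.inl u, Sum.inl v) ↔
      G.inc e = s(u, v) :=
    (Sym2.map.injective Sum.inl_injective).eq_iff (b := s(u, v))
  simp [Step, starGraph, hinc]

theorem step_starGraph_inr_inl :
    (G.starGraph W comp).Step (adjoinInr F) (Sum.inr i) (Sum.inl v) ↔
      v ∈ G.supp W ∧ comp v = i := by
  simp [Step, starGraph, map_inl_ne_mk_inr, and_comm]

theorem not_step_starGraph_inr_inr :
    ¬ (G.starGraph W comp).Step (adjoinInr F) (Sum.inr i) (Sum.inr j) := by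
  simp [Step, starGraph, map_inl_ne_mk_inr]

theorem reach_starGraph_center (hv : v ∈ G.supp W) :
    (G.starGraph W comp).Reach (adjoinInr F) (Sum.inr (comp v)) (Sum.inl v) :=
  (step_starGraph_inr_inl.2 ⟨hv, rfl⟩).reach

theorem Reach.starGraph_inl (h : G.IsComponentIndexing W comp) (huv : G.Reach (F ∪ W) u v) :
    (G.starGraph W comp).Reach (adjoinInr F) (Sum.inl u) (Sum.inl v) := by
  refine Relation.ReflTransGen.lift' Sum.inl (fun a b hab => ?_) _ _ huv
  obtain ⟨e, heF | heW, hinc⟩ := hab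
  · exact (step_starGraph_inl_inl.2 ⟨e, heF, hinc⟩).reach
  · have hstep : G.Step W a b := ⟨e, heW, hinc⟩
    obtain ⟨ha, hb⟩ := hstep.mem_supp
    have hcomp : comp a = comp b := (h.eq_iff_reach a b ha hb).2 hstep.reach
    exact (reach_starGraph_center ha).symm.trans (hcomp ▸ reach_starGraph_center hb)

theorem Reach.of_starGraph_inl (h : G.IsComponentIndexing W comp)
    (huv : (G.starGraph W comp).Reach (adjoinInr F) (Sum.inl u) (Sum.inl v)) :
    G.Reach (F ∪ W) u v := by
  choose rep hrep hcomp_rep using h.exists_mem_supp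
  have hcenter {i v} (hstep : (G.starGraph W comp).Step (adjoinInr F) (Sum.inr i) (Sum.inl v)) :
      G.Reach (F ∪ W) (rep i) v := by
    obtain ⟨hv, rfl⟩ := step_starGraph_inr_inl.1 hstep
    exact ((h.eq_iff_reach _ v (hrep _) hv).1 (hcomp_rep _)).mono Set.subset_union_right
  refine Relation.ReflTransGen.lift' (Sum.elim id rep) ?_ _ _ huv
  rintro (a | i) (b | j) hstep
  · exact ((step_starGraph_inl_inl.1 hstep).mono Set.subset_union_left).reach
  · exact (hcenter (step_symm _ _ hstep)).symm
  · exact hcenter hstep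
  · exact absurd hstep not_step_starGraph_inr_inr

theorem IsComponentIndexing.connectedOn_starGraph_iff (h : G.IsComponentIndexing W comp) :
    (G.starGraph W comp).ConnectedOn (adjoinInr F) ↔ G.ConnectedOn (F ∪ W) := by
  refine ⟨fun hconn u v => (hconn _ _).of_starGraph_inl h, fun hconn x y => ?_⟩
  have hreach_inl (z : V ⊕ Fin r) :
      ∃ v, (G.starGraph W comp).Reach (adjoinInr F) z (Sum.inl v) := by
    rcases z with v | i
    · exact ⟨v, Reach.refl _ _ _⟩
    · obtain ⟨v, hv, rfl⟩ := h.exists_mem_supp i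
      exact ⟨v, reach_starGraph_center hv⟩
  obtain ⟨u, hxu⟩ := hreach_inl x
  obtain ⟨v, hyv⟩ := hreach_inl y
  exact (hxu.trans ((hconn u v).starGraph_inl h)).trans hyv.symm

theorem card_starEdges (G : Multigraph V E) (W : Set E) (comp : V → Fin r) :
    Nat.card {p : Fin r × V // p.2 ∈ G.supp W ∧ comp p.2 = p.1} = (G.supp W).ncard := by
  refine Nat.card_eq_of_bijective (fun p => (⟨p.1.2, p.2.1⟩ : G.supp W)) ⟨?_, fun v => ?_⟩
  · rintro ⟨⟨i, v⟩, hv, hi⟩ ⟨⟨j, w⟩, hw, hj⟩ hvw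
    obtain rfl : v = w := congrArg Subtype.val hvw
    obtain rfl : i = j := hi.symm.trans hj
    rfl
  · exact ⟨⟨(comp v, v), v.2, rfl⟩, rfl⟩

variable [Finite V]

theorem IsComponentIndexing.disjoint_of_isSpanningTree_starGraph
    (h : G.IsComponentIndexing W comp) (hF : F.Finite)
    (htree : (G.starGraph W comp).IsSpanningTree (adjoinInr F)) : Disjoint F W := by
  have hconn : (G.starGraph W comp).ConnectedOn (adjoinInr (F \ W)) := by
    rw [h.connectedOn_starGraph_iff, Set.sdiff_union_self]
    exact h.connectedOn_starGraph_iff.1 htree.1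
  have heq := htree.eq_of_subset (finite_adjoinInr hF)
    (adjoinInr_subset_adjoinInr.2 Set.sdiff_subset) hconn
  exact sdiff_eq_left.1 (adjoinInr_injective heq)

theorem IsForest.isSpanningTree_starGraph_iff (hW : G.IsForest W) (hWfin : W.Finite)
    (h : G.IsComponentIndexing W comp) (hF : F.Finite) (hFW : Disjoint F W) :
    (G.starGraph W comp).IsSpanningTree (adjoinInr F) ↔ G.IsSpanningTree (F ∪ W) := by
  have hcard := hW.ncard_add_card_eq_ncard_supp hWfin h
  rw [Nat.card_fin] at hcard
  rw [IsSpanningTree, IsSpanningTree, h.connectedOn_starGraph_iff, ncard_adjoinInr hF,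
    card_starEdges, Set.ncard_union_eq hFW hF hWfin, Nat.card_sum, Nat.card_fin]
  exact and_congr_right fun _ => by omega

variable [Finite E]

theorem IsForest.ST_starGraph (hW : G.IsForest W) (h : G.IsComponentIndexing W comp) :
    (G.starGraph W comp).ST (Set.range Sum.inr) = (fun T => adjoinInr (T \ W)) '' G.ST W := by
  ext S
  constructor
  · rintro ⟨htree, hS⟩
    obtain ⟨F, rfl⟩ := range_inr_subset_iff.1 hS
    have hFW := h.disjoint_of_isSpanningTree_starGraph F.toFinite htree
    have htree' := (hW.isSpanningTree_starGraph_iff W.toFinite h F.toFinite hFW).1 htree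
    refine ⟨F ∪ W, ⟨htree', Set.subset_union_right⟩, ?_⟩
    simp only [Set.union_sdiff_right, hFW.sdiff_eq_left]
  · rintro ⟨T, ⟨htree, hWT⟩, rfl⟩
    refine ⟨?_, Set.subset_union_right⟩
    rwa [hW.isSpanningTree_starGraph_iff W.toFinite h (Set.toFinite _) Set.disjoint_sdiff_left,
      Set.sdiff_union_of_subset hWT]

theorem IsForest.tau_starGraph_range_inr (hW : G.IsForest W) (h : G.IsComponentIndexing W comp) :
    (G.starGraph W comp).tau (Set.range Sum.inr) = G.tau W := by
  rw [tau, hW.ST_starGraph h, tau]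
  refine Set.InjOn.ncard_image fun T hT T' hT' heq => ?_
  rw [← Set.sdiff_union_of_subset hT.2, ← Set.sdiff_union_of_subset hT'.2,
    adjoinInr_injective heq]

theorem IsComponentIndexing.disjoint_of_mem_ST_starGraph (h : G.IsComponentIndexing W comp)
    {S : Set (E ⊕ {p : Fin r × V // p.2 ∈ G.supp W ∧ comp p.2 = p.1})}
    (hS : S ∈ (G.starGraph W comp).ST (Set.range Sum.inr)) : Disjoint S (Sum.inl '' W) := by
  obtain ⟨F, rfl⟩ := range_inr_subset_iff.1 hS.2
  exact disjoint_adjoinInr_image_inl.2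
    (h.disjoint_of_isSpanningTree_starGraph F.toFinite hS.1)

theorem IsComponentIndexing.tau_deleteEdges_starGraph (h : G.IsComponentIndexing W comp)
    {W₀ : Set E} (hW₀ : W₀ ⊆ W) :
    ((G.starGraph W comp).deleteEdges (Sum.inl '' W₀)).tau (Subtype.val ⁻¹' Set.range Sum.inr) =
      (G.starGraph W comp).tau (Set.range Sum.inr) :=
  tau_deleteEdges (disjoint_range_inr_image_inl W₀) fun _ hT =>
    (h.disjoint_of_mem_ST_starGraph hT).mono_right (Set.image_mono hW₀)

end StarGraph

end Multigraph

/-- `τ_G(W) = τ_{G⋆W}(W') = τ_{(G⋆W)−W₀}(W')`, where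
`W' = E(G⋆W) − E(G)` and `W₀ ⊆ W`. -/
theorem tau_starGraph {V : Type u} {E : Type v} [Fintype V] [Fintype E]
    (G : Multigraph V E) (hconn : G.Connected)
    (W : Set E) (hforest : G.IsForest W)
    (r : ℕ) (comp : V → Fin r)
    (hcomp : ∀ u v : V, u ∈ G.supp W → v ∈ G.supp W →
      (comp u = comp v ↔ G.Reach W u v))
    (hsurj : ∀ i : Fin r, ∃ v ∈ G.supp W, comp v = i)
    (W₀ : Set E) (hW₀ : W₀ ⊆ W) :
    G.tau W = (G.starGraph W comp).tau (Set.range Sum.inr) ∧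
    G.tau W = ((G.starGraph W comp).deleteEdges (Sum.inl '' W₀)).tau
      (Subtype.val ⁻¹' (Set.range Sum.inr)) := by
  have hindex : G.IsComponentIndexing W comp := ⟨hcomp, hsurj⟩
  have htau := hforest.tau_starGraph_range_inr hindex
  exact ⟨htau.symm, ((hindex.tau_deleteEdges_starGraph hW₀).trans htau).symm⟩

end PaperST
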